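/- For all integers n ≥ 1 and k ≥ 1, the sum over all Dyck bridges B of length 2n whose partial sums all lie in the interval [−2, 2] of k^(c(B)), where c(B) is the number of crossings of the x-axis of B, equals 2·(k+2)^(n−1). (Equivalently, Dyck bridges of length 2n in the strip [−2,2] with each crossing of the x-axis colored in one of k colors are counted by 2(k+2)^(n−1).) -/

import Mathlib

/-- The step associated to a letter: `true` is an up step `+1`, `false` a down step `-1`. -/
def stepVal (b : Bool) : ℤ := if b then 1 else -1

/-- Partial sum `S_i`: the sum of the first `i` steps of the word `w`. -/
def psum {L : ℕ} (w : Fin L → Bool) (i : ℕ) : ℤ :=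
  ∑ j : Fin L, if (j : ℕ) < i then stepVal (w j) else 0

/-- A Dyck bridge: a `±1` word whose total sum is `0`. -/
def IsBridge {L : ℕ} (w : Fin L → Bool) : Prop := psum w L = 0

/-- A Dyck path: a bridge all of whose partial sums are nonnegative. -/
def IsDyck {L : ℕ} (w : Fin L → Bool) : Prop :=
  IsBridge w ∧ ∀ i : ℕ, 0 ≤ psum w i

/-- A peak at (0-based) position `i`: step `i` is up and step `i+1` is down. -/
def IsPeak {L : ℕ} (w : Fin L → Bool) (i : ℕ) : Prop :=
  ∃ j k : Fin L, (j : ℕ) = i ∧ (k : ℕ) = i + 1 ∧ w j = true ∧ w k = false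

/-- The height of the peak at (0-based) position `i`, i.e. the altitude
reached by its up step. -/
def peakHeight {L : ℕ} (w : Fin L → Bool) (i : ℕ) : ℤ := psum w (i + 1)

/-- A crossing of the x-axis at (1-based) index `i`: `0 < i < L`, `S_i = 0`,
and the steps `w_i`, `w_{i+1}` (1-based) are equal. -/
def IsCrossing {L : ℕ} (w : Fin L → Bool) (i : ℕ) : Prop :=
  0 < i ∧ i < L ∧ psum w i = 0 ∧
    ∃ j k : Fin L, (j : ℕ) + 1 = i ∧ (k : ℕ) = i ∧ w j = w k

def IsCr {L : ℕ} (h : ℤ) (w : Fin L → Bool) (i : ℕ) : Prop :=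
  0 < i ∧ i < L ∧ h + psum w i = 0 ∧
    ∃ j k : Fin L, (j : ℕ) + 1 = i ∧ (k : ℕ) = i ∧ w j = w k

lemma psum_zero' {L : ℕ} (w : Fin L → Bool) : psum w 0 = 0 := by simp [psum]

lemma psum_cons {L : ℕ} (b : Bool) (w : Fin L → Bool) (i : ℕ) :
    psum (Fin.cons b w : Fin (L+1) → Bool) (i+1) = stepVal b + psum w i := by
  simp [psum, Fin.sum_univ_succ]

lemma isCr_one {L : ℕ} (h : ℤ) (b c : Bool) (w : Fin L → Bool) :
    IsCr h (Fin.cons b (Fin.cons c w : Fin (L+1) → Bool) : Fin (L+2) → Bool) 1 ↔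
      (h + stepVal b = 0 ∧ b = c) := by
  unfold IsCr
  rw [psum_cons, psum_zero']
  constructor
  · rintro ⟨_, _, h1, j, k, hj, hk, e⟩
    have hj : j = 0 := by ext; simpa using hj
    have hk : k = Fin.succ 0 := by ext; simpa using hk
    subst hj hk
    simp only [Fin.cons_zero, Fin.cons_succ] at e
    exact ⟨by simpa using h1, e⟩
  · rintro ⟨h1, e⟩
    refine ⟨by omega, by omega, by simpa using h1, 0, Fin.succ 0, by simp, by simp, ?_⟩
    simpa only [Fin.cons_zero, Fin.cons_succ] using e

lemma isCr_succ {L : ℕ} (h : ℤ) (b : Bool) (w : Fin L → Bool) (i : ℕ) :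
    IsCr h (Fin.cons b w : Fin (L+1) → Bool) (i+2) ↔ IsCr (h + stepVal b) w (i+1) := by
  unfold IsCr
  rw [psum_cons, ← add_assoc]
  constructor
  · rintro ⟨_, h0, h1, j, k, hj, hk, e⟩
    refine ⟨by omega, by omega, h1, ?_⟩
    cases j using Fin.cases with
    | zero => simp at hj
    | succ j =>
    cases k using Fin.cases with
    | zero => simp at hk
    | succ k =>
    simp only [Fin.cons_succ] at e
    simp only [Fin.val_succ] at hj hk
    exact ⟨j, k, by omega, by omega, e⟩
  · rintro ⟨_, h0, h1, j, k, hj, hk, e⟩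
    refine ⟨by omega, by omega, h1, j.succ, k.succ, ?_, ?_, ?_⟩
    · simp only [Fin.val_succ]; omega
    · simp only [Fin.val_succ]; omega
    · simpa only [Fin.cons_succ] using e

def Gd {L : ℕ} (h : ℤ) (v : Fin L → Bool) : Prop :=
  h + psum v L = 0 ∧ ∀ i : ℕ, -2 ≤ h + psum v i ∧ h + psum v i ≤ 2

lemma gd_cons {L : ℕ} (h : ℤ) (b : Bool) (w : Fin L → Bool) :
    Gd h (Fin.cons b w : Fin (L+1) → Bool) ↔ ((-2 ≤ h ∧ h ≤ 2) ∧ Gd (h + stepVal b) w) := by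
  unfold Gd
  rw [psum_cons, ← add_assoc]
  constructor
  · rintro ⟨h1, h2⟩
    refine ⟨by simpa [psum_zero'] using h2 0, h1, fun i => ?_⟩
    simpa only [psum_cons, ← add_assoc] using h2 (i+1)
  · rintro ⟨h0, h1, h2⟩
    refine ⟨h1, fun i => ?_⟩
    cases i with
    | zero => simpa [psum_zero'] using h0
    | succ i => simpa only [psum_cons, ← add_assoc] using h2 i

open scoped Classical in
noncomputable def wt {L : ℕ} (k : ℕ) (h : ℤ) (v : Fin L → Bool) : ℕ :=
  (if Gd h v then 1 else 0) * ∏ i ∈ Finset.range L, if IsCr h v i then k else 1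

open scoped Classical in
lemma wt_cons {L : ℕ} (k : ℕ) (h : ℤ) (b c : Bool) (w : Fin L → Bool) :
    wt k h (Fin.cons b (Fin.cons c w : Fin (L+1) → Bool) : Fin (L+2) → Bool) =
    (if -2 ≤ h ∧ h ≤ 2 then 1 else 0) * ((if h + stepVal b = 0 ∧ b = c then k else 1) *
      wt k (h + stepVal b) (Fin.cons c w : Fin (L+1) → Bool)) := by
  have z : ∀ {M : ℕ} (h : ℤ) (v : Fin M → Bool), ¬ IsCr h v 0 := fun h v H => by
    simp [IsCr] at H
  unfold wt
  rw [Finset.prod_range_succ', Finset.prod_range_succ', Finset.prod_range_succ' _ L]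
  simp only [zero_add, add_assoc, Nat.reduceAdd, isCr_succ, isCr_one, z, gd_cons h]
  by_cases h1 : -2 ≤ h ∧ h ≤ 2
  · by_cases h2 : Gd (h + stepVal b) (Fin.cons c w : Fin (L+1) → Bool)
    · simp [h1, h2, mul_comm]
    · simp [h2]
  · simp [h1]

noncomputable def FF (k L : ℕ) (h : ℤ) (b : Bool) : ℕ :=
  ∑ w : Fin L → Bool, wt k h (Fin.cons b w : Fin (L+1) → Bool)

lemma sum_cons {L : ℕ} (f : (Fin (L+1) → Bool) → ℕ) :
    ∑ w, f w = ∑ c : Bool, ∑ w : Fin L → Bool, f (Fin.cons c w) := by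
  rw [← (Fin.consEquiv (fun _ : Fin (L+1) => Bool)).sum_comp, Fintype.sum_prod_type]
  rfl

lemma FF_succ (k L : ℕ) (h : ℤ) (b : Bool) :
    FF k (L+1) h b = (if -2 ≤ h ∧ h ≤ 2 then 1 else 0) *
      ∑ c : Bool, (if h + stepVal b = 0 ∧ b = c then k else 1) * FF k L (h + stepVal b) c := by
  unfold FF
  rw [sum_cons]
  simp only [wt_cons, Finset.mul_sum]

lemma FF_zero (k : ℕ) (h : ℤ) (b : Bool) :
    FF k 0 h b = if (-2 ≤ h ∧ h ≤ 2) ∧ h + stepVal b = 0 then 1 else 0 := by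
  classical
  have : ∀ v : Fin 0 → Bool, Gd (h + stepVal b) v ↔ h + stepVal b = 0 := by
    intro v
    simp only [Gd, psum, Finset.univ_eq_empty, Finset.sum_empty, add_zero]
    constructor
    · exact fun x => x.1
    · exact fun x => ⟨x, fun _ => by omega⟩
  unfold FF
  rw [Fintype.sum_unique]
  simp [wt, gd_cons, this, IsCr]

lemma FF_out (k L : ℕ) (h : ℤ) (b : Bool) (hh : ¬ (-2 ≤ h ∧ h ≤ 2)) : FF k L h b = 0 := by
  cases L with
  | zero => rw [FF_zero, if_neg (fun x => hh x.1)]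
  | succ L => rw [FF_succ, if_neg hh, zero_mul]

lemma FF_main (k m : ℕ) (b : Bool) : FF k (2*m+1) 0 b = (k+2)^m := by
  induction m generalizing b with
  | zero => cases b <;> simp [FF_succ, FF_zero, stepVal, Fintype.sum_bool, -Finset.sum_boole]
  | succ m ih =>
    have e : 2*(m+1)+1 = 2*m+1+1+1 := by ring
    have key : ∀ b, FF k (2*m+1) (2 * stepVal b) (!b) = (k+2)^m := by
      intro b
      rw [← ih b, FF_succ, FF_succ]
      cases b <;> simp [stepVal]
    have k1 := key true
    have k2 := key false
    have o : ∀ L, FF k L 3 true = 0 := fun L => FF_out _ _ _ _ (by omega)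
    have o2 : FF k (2*m+1) 2 true = 0 := by
      rw [FF_succ]; simp [stepVal, FF_out]
    have o3 : FF k (2*m+1) (-2) false = 0 := by
      rw [FF_succ]; simp [stepVal, FF_out]
    rw [e, FF_succ]
    simp only [FF_succ k (2*m+1)]
    cases b <;> simp [stepVal, ih] at k1 k2 ⊢ <;> simp [k1, k2, o2, o3] <;> ring

open scoped Classical in
/-- For all integers `n ≥ 1` and `k ≥ 1`, the sum over all Dyck
bridges `B` of length `2n` whose partial sums all lie in `[-2, 2]` of
`k^(c(B))`, where `c(B)` is the number of crossings of the x-axis of `B`,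
equals `2 * (k+2)^(n-1)`. -/
theorem stmt_9 (n k : ℕ) (hn : 1 ≤ n) (hk : 1 ≤ k) :
    (∑ w ∈ Finset.univ.filter
        (fun w : Fin (2 * n) → Bool =>
          IsBridge w ∧ ∀ i : ℕ, -2 ≤ psum w i ∧ psum w i ≤ 2),
      k ^ Nat.card {i : ℕ // IsCrossing w i}) = 2 * (k + 2) ^ (n - 1) := by
  have h1 : ∀ {L : ℕ} (w : Fin L → Bool), k ^ Nat.card {i : ℕ // IsCrossing w i} =
      ∏ i ∈ Finset.range L, if IsCr 0 w i then k else 1 := by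
    intro L w
    rw [Finset.prod_ite, Finset.prod_const, Finset.prod_const_one, mul_one]
    congr 1
    apply Nat.subtype_card
    intro i
    simp only [Finset.mem_filter, Finset.mem_range, IsCr, IsCrossing, zero_add]
    tauto
  have h2 : ∀ L : ℕ, (∑ w ∈ Finset.univ.filter
        (fun w : Fin L → Bool =>
          IsBridge w ∧ ∀ i : ℕ, -2 ≤ psum w i ∧ psum w i ≤ 2),
      k ^ Nat.card {i : ℕ // IsCrossing w i}) = ∑ w : Fin L → Bool, wt k 0 w := by
    intro L
    rw [Finset.sum_filter]
    refine Finset.sum_congr rfl fun w _ => ?_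
    rw [h1]
    simp only [wt, Gd, IsBridge, zero_add, ite_mul, one_mul, zero_mul]
    congr
  rw [h2]
  obtain ⟨m, rfl⟩ : ∃ m, n = m + 1 := ⟨n - 1, by omega⟩
  have e : ∑ w : Fin (2 * m + 1 + 1) → Bool, wt k 0 w = 2 * (k + 2) ^ m := by
    rw [sum_cons]
    have := FF_main k m
    unfold FF at this
    simp only [this]
    simp
  exact e
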